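/- (Theorem 7) There exists a continuous function C : [0,1) → (0,∞) such that for every λ ∈ [0,1) the limit lim_{n→∞} (Σ_{k > λn} a_{n,k})^{1/n} exists and equals C(λ); moreover C(1/2) = C_1 and C(λ) < C(1/2) for every λ with 1/2 < λ < 1. -/

import Mathlib

open SimpleGraph

/-- A rooted tree on vertex set `Fin n`: a connected acyclic simple graph
with a distinguished root vertex. -/
structure RTree (n : ℕ) where
  adj : SimpleGraph (Fin n)
  connected : adj.Connected
  acyclic : adj.IsAcyclic
  root : Fin n

/-- `v` is a leaf of the rooted tree `t`: a vertex of degree one other than the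
root, except that in the one-vertex tree the root counts as a leaf. -/
def IsLeafV {n : ℕ} (t : RTree n) (v : Fin n) : Prop :=
  n = 1 ∨ ((t.adj.neighborSet v).ncard = 1 ∧ v ≠ t.root)

/-- The number of leaves of a rooted tree. -/
noncomputable def numLeaves {n : ℕ} (t : RTree n) : ℕ :=
  Nat.card {v : Fin n // IsLeafV t v}

/-- Root-preserving isomorphism of rooted trees. -/
def treeSetoid (n : ℕ) : Setoid (RTree n) where
  r t t' := ∃ e : t.adj ≃g t'.adj, e t.root = t'.root
  iseqv := by
    constructor
    · intro t; exact ⟨RelIso.refl _, rfl⟩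
    · rintro t t' ⟨e, he⟩
      exact ⟨e.symm, by rw [← he]; exact e.symm_apply_apply t.root⟩
    · rintro a b c ⟨e, he⟩ ⟨f, hf⟩
      exact ⟨e.trans f, by simp [RelIso.trans_apply, he, hf]⟩

/-- `aCount n k` : the number of isomorphism classes of rooted trees with `n`
vertices and exactly `k` leaves. -/
noncomputable def aCount (n k : ℕ) : ℕ :=
  Nat.card (Quotient (Setoid.comap
    (Subtype.val : {t : RTree n // numLeaves t = k} → RTree n)
    (treeSetoid n)))

/-- `a_n^+ = Σ_{k > n/2} a_{n,k}`: the number of rooted trees with `n`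
vertices more than half of whose vertices are leaves. -/
noncomputable def aPlusN (n : ℕ) : ℕ :=
  Nat.card (Quotient (Setoid.comap
    (Subtype.val : {t : RTree n // n < 2 * numLeaves t} → RTree n)
    (treeSetoid n)))

/-- `Σ_{k > λn} a_{n,k}`: the number of rooted trees with `n` vertices and
more than `λn` leaves. -/
noncomputable def aboveCount (lam : ℝ) (n : ℕ) : ℕ :=
  Nat.card (Quotient (Setoid.comap
    (Subtype.val : {t : RTree n // lam * n < (numLeaves t : ℝ)} → RTree n)
    (treeSetoid n)))

/-!
Making one rooted tree a branch of another loses no leaves, so the logarithms of the counts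
`Σ_{k > λn} a_{n,k}` are superadditive in `n`; as there are at most `4 ^ n` rooted trees with `n`
vertices, Fekete's lemma gives the growth rate `g(λ) = log C(λ)` for `λ < 1`. Joining two trees with
different proportions of leaves shows that `g` is concave on `(-∞, 1)`, hence continuous.

By concavity, `g` strictly decreases from `1/2` on as soon as `g(λ) < g(0)` for all `λ > 1/2`. Fix
`1/2 < θ < λ` and let `D_n(v)` be the sum of `(leaves - θ n) v ^ leaves` over the trees with `n`
vertices. Splitting a tree at its root turns `D_n` into a sum over branches plus `-θ` for the root
itself; the branches consisting of a single vertex contribute at most `(1 - θ) v` per tree, and the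
only other possibly positive terms come from repeated branches, which are so rare that their total
is `O(v - 1)`. Since `(1 - θ) - θ < 0`, induction on `n` gives `D_n(v) ≤ 0` for some `v > 1` and all
`n ≥ 2`. The inequality `1 - x log v ≤ v ^ (-x)` with `x = leaves - θ n` then bounds the sum of
`v ^ (leaves - θ n)` by the number of trees, so trees with more than `λ n` leaves are exponentially
rare.
-/

/-! ### Unlabelled rooted trees -/

/-- The bijection sending `c` to the `c`-th prime, counting from `0`. -/
noncomputable def nthPrime : ℕ ≃ Nat.Primes :=
  Equiv.ofBijective (fun c => ⟨Nat.nth Nat.Prime c, Nat.prime_nth_prime c⟩)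
    ⟨fun _ _ h => Nat.nth_injective Nat.infinite_setOfPred_prime (congrArg Subtype.val h),
      fun p => ⟨Nat.count Nat.Prime p, Subtype.ext (Nat.nth_count p.2)⟩⟩

/-- Unlabelled rooted trees, encoded by Matula numbers: the tree `u : ℕ` has one branch `c` for each
prime factor `nthPrime c` of `u + 1`, counted with multiplicity. -/
def UTree : Type := ℕ

noncomputable instance : LinearOrder UTree := inferInstanceAs (LinearOrder ℕ)

instance : WellFoundedRelation UTree := ⟨(· < ·), Nat.lt_wfRel.wf⟩

namespace UTree

/-- The multiset of branches at the root of an unlabelled rooted tree. -/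
noncomputable def branches : UTree ≃ Multiset UTree :=
  (Equiv.pnatEquivNat.symm.trans PNat.factorMultisetEquiv).trans
    (Functor.mapEquiv Multiset nthPrime.symm)

theorem lt_of_mem_branches {u c : UTree} (h : c ∈ branches u) : c < u := by
  obtain ⟨p, hp, rfl⟩ := Multiset.mem_map (s := PNat.factorMultiset (Nat.succPNat u)).1 h
  have hdvd : (p : ℕ+) ∣ (PNat.factorMultiset (Nat.succPNat u)).prod :=
    Multiset.dvd_prod (Multiset.mem_map_of_mem _ hp)
  rw [PNat.prod_factorMultiset] at hdvd
  have hle : (p : ℕ) ≤ Nat.succ u := PNat.le_of_dvd hdvd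
  have hlt : nthPrime.symm p + 2 ≤ nthPrime (nthPrime.symm p) := Nat.add_two_le_nth_prime _
  rw [Equiv.apply_symm_apply] at hlt
  exact Nat.le_of_succ_le_succ (hlt.trans hle)

/-- Evaluation of a tree from the leaves upwards: the value of `f` at the multiset of values of the
branches. -/
noncomputable def fold {β : Type*} (f : Multiset β → β) (u : UTree) : β :=
  f ((branches u).attach.map fun c => fold f c.1)
termination_by u
decreasing_by exact lt_of_mem_branches c.2

theorem fold_eq {β : Type*} (f : Multiset β → β) (u : UTree) :
    fold f u = f ((branches u).map (fold f)) := by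
  rw [fold, Multiset.attach_map_val']

/-- The number of vertices of a tree. -/
noncomputable def size : UTree → ℕ := fold fun M => 1 + M.sum

/-- The number of leaves of a tree, with the convention that the one-vertex tree has one. -/
noncomputable def leaves : UTree → ℕ := fold fun M => if M = 0 then 1 else M.sum

/-- The total number of leaves of the branches of a tree. It agrees with `leaves` except on the
one-vertex tree, where it is `0`; unlike `leaves` it is additive over the branches. -/
noncomputable def branchLeaves (u : UTree) : ℕ := ((branches u).map leaves).sum

theorem size_eq (u : UTree) : size u = 1 + ((branches u).map size).sum := fold_eq _ u

theorem leaves_eq (u : UTree) :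
    leaves u = if branches u = 0 then 1 else branchLeaves u := by
  rw [leaves, fold_eq]
  simp only [Multiset.map_eq_zero]
  rfl

theorem size_pos (u : UTree) : 0 < size u := by
  rw [size_eq]
  exact Nat.add_pos_left one_pos _

/-- The one-vertex tree. -/
noncomputable def leaf : UTree := branches.symm 0

/-- The tree `u` with `c` added as a further branch at its root. -/
noncomputable def attach (u c : UTree) : UTree := branches.symm (c ::ₘ branches u)

@[simp] theorem branches_leaf : branches leaf = 0 := branches.apply_symm_apply 0

@[simp] theorem branches_attach (u c : UTree) : branches (attach u c) = c ::ₘ branches u :=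
  branches.apply_symm_apply _

@[simp] theorem size_leaf : size leaf = 1 := by simp [size_eq leaf]

@[simp] theorem leaves_leaf : leaves leaf = 1 := by simp [leaves_eq]

@[simp] theorem branchLeaves_leaf : branchLeaves leaf = 0 := by simp [branchLeaves]

@[simp] theorem size_attach (u c : UTree) : size (attach u c) = size u + size c := by
  simp only [size_eq (attach u c), size_eq u, branches_attach, Multiset.map_cons,
    Multiset.sum_cons]
  ring

@[simp] theorem branchLeaves_attach (u c : UTree) :
    branchLeaves (attach u c) = branchLeaves u + leaves c := by
  simp [branchLeaves, add_comm]

@[simp] theorem leaves_attach (u c : UTree) :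
    leaves (attach u c) = branchLeaves u + leaves c := by
  simp [leaves_eq (attach u c)]

theorem eq_leaf_or_exists_eq_attach (u : UTree) : u = leaf ∨ ∃ w c, u = attach w c := by
  rcases (branches u).empty_or_exists_mem with h | ⟨c, hc⟩
  · exact .inl (branches.eq_symm_apply.2 h)
  · refine .inr ⟨branches.symm ((branches u).erase c), c, branches.injective ?_⟩
    rw [branches_attach, Equiv.apply_symm_apply, Multiset.cons_erase hc]

@[elab_as_elim]
theorem attach_induction {P : UTree → Prop} (leaf : P leaf)
    (attach : ∀ u c, P u → P c → P (attach u c)) (u : UTree) : P u := by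
  induction hn : size u using Nat.strong_induction_on generalizing u with
  | _ n ih =>
    obtain rfl | ⟨w, c, rfl⟩ := eq_leaf_or_exists_eq_attach u
    · exact leaf
    · rw [size_attach] at hn
      have hw := size_pos w
      have hc := size_pos c
      exact attach w c (ih _ (by omega) w rfl) (ih _ (by omega) c rfl)

theorem branchLeaves_le_leaves (u : UTree) : branchLeaves u ≤ leaves u := by
  obtain rfl | ⟨w, c, rfl⟩ := eq_leaf_or_exists_eq_attach u <;> simp

theorem leaves_pos (u : UTree) : 0 < leaves u := by
  induction u using attach_induction with
  | leaf => simp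
  | attach u c _ hc => simpa using .inr hc

theorem branchLeaves_lt_size (u : UTree) : branchLeaves u < size u := by
  induction u using attach_induction with
  | leaf => simp
  | attach u c hu hc =>
    have : leaves c ≤ size c := by
      obtain rfl | ⟨w, c, rfl⟩ := eq_leaf_or_exists_eq_attach c
      · simp
      · simpa using hc.le
    rw [branchLeaves_attach, size_attach]
    omega

theorem leaves_le_size (u : UTree) : leaves u ≤ size u := by
  obtain rfl | ⟨w, c, rfl⟩ := eq_leaf_or_exists_eq_attach u
  · simp
  · simpa using (branchLeaves_lt_size (attach w c)).le

theorem size_lt_of_mem_branches {u c : UTree} (h : c ∈ branches u) : size c < size u := by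
  have : size c ≤ ((branches u).map size).sum :=
    Multiset.single_le_sum (fun _ _ => zero_le) _ (Multiset.mem_map_of_mem _ h)
  rw [size_eq u]
  omega

theorem eq_leaf_of_size_eq_one {u : UTree} (h : size u = 1) : u = leaf := by
  obtain rfl | ⟨w, c, rfl⟩ := eq_leaf_or_exists_eq_attach u
  · rfl
  · have hw := size_pos w
    have hc := size_pos c
    rw [size_attach] at h
    omega

theorem leaves_eq_branchLeaves {u : UTree} (h : 2 ≤ size u) : leaves u = branchLeaves u := by
  obtain rfl | ⟨w, c, rfl⟩ := eq_leaf_or_exists_eq_attach u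
  · simp at h
  · simp

theorem attach_right_injective (u : UTree) : Function.Injective (attach u) := fun _ _ h =>
  (Multiset.cons_inj_left _).1 (branches.symm.injective h)

theorem attach_left_injective (c : UTree) : Function.Injective (attach · c) := fun _ _ h =>
  branches.injective ((Multiset.cons_inj_right c).1 (branches.symm.injective h))

theorem attach_inj_of_size_eq {u c u' c' : UTree} (hu : size u = size u') (hc : size c = size c')
    (h : size u ≤ size c) : attach u c = attach u' c' ↔ u = u' ∧ c = c' := by
  refine ⟨fun he => ?_, fun ⟨h₁, h₂⟩ => h₁ ▸ h₂ ▸ rfl⟩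
  obtain ⟨hcc, huu⟩ | ⟨-, M, hM, -⟩ := Multiset.cons_eq_cons.1 (branches.symm.injective he)
  · exact ⟨branches.injective huu, hcc⟩
  · have hlt : size c' < size u := size_lt_of_mem_branches (hM ▸ Multiset.mem_cons_self c' M)
    omega

/-- Two trees glued along their sizes: the larger one becomes a branch of the smaller one. This
makes the operation injective on pairs of prescribed sizes. -/
noncomputable def glue (u c : UTree) : UTree :=
  if size u ≤ size c then attach u c else attach c u

theorem size_glue (u c : UTree) : size (glue u c) = size u + size c := by
  unfold glue
  split_ifs <;> simp [add_comm]

theorem branchLeaves_add_le_leaves_glue (u c : UTree) :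
    branchLeaves u + branchLeaves c ≤ leaves (glue u c) := by
  have hu := branchLeaves_le_leaves u
  have hc := branchLeaves_le_leaves c
  unfold glue
  split_ifs <;> rw [leaves_attach] <;> omega

theorem glue_inj_of_size_eq {u c u' c' : UTree} (hu : size u = size u') (hc : size c = size c') :
    glue u c = glue u' c' ↔ u = u' ∧ c = c' := by
  unfold glue
  rw [← hu, ← hc]
  split_ifs with h
  · exact attach_inj_of_size_eq hu hc h
  · rw [attach_inj_of_size_eq hc hu (not_le.1 h).le, and_comm]

/-! ### The finite set of trees with a given number of vertices -/

/-- The tree obtained from a binary tree by reading each node as `attach`. -/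
noncomputable def ofBinary : BinaryTree Unit → UTree
  | .nil => leaf
  | .node _ l r => attach (ofBinary l) (ofBinary r)

theorem size_ofBinary (t : BinaryTree Unit) : size (ofBinary t) = t.numNodes + 1 := by
  induction t with
  | nil => simp [ofBinary]
  | node _ l r hl hr =>
    rw [ofBinary, size_attach, hl, hr, BinaryTree.numNodes]
    ring

theorem ofBinary_surjective : Function.Surjective ofBinary := fun u => by
  induction u using attach_induction with
  | leaf => exact ⟨.nil, rfl⟩
  | attach u c hu hc =>
    obtain ⟨l, rfl⟩ := hu
    obtain ⟨r, rfl⟩ := hc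
    exact ⟨.node () l r, rfl⟩

/-- The finite set of unlabelled rooted trees with `n` vertices. -/
noncomputable def ofSize : ℕ → Finset UTree
  | 0 => ∅
  | n + 1 => (BinaryTree.treesOfNumNodesEq n).image ofBinary

@[simp] theorem mem_ofSize {n : ℕ} {u : UTree} : u ∈ ofSize n ↔ size u = n := by
  cases n with
  | zero => simp [ofSize, (size_pos u).ne']
  | succ n =>
    obtain ⟨t, rfl⟩ := ofBinary_surjective u
    simp only [ofSize, Finset.mem_image, BinaryTree.mem_treesOfNumNodesEq, size_ofBinary,
      Nat.add_right_cancel_iff]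
    refine ⟨fun ⟨s, hs, hst⟩ => ?_, fun h => ⟨t, h, rfl⟩⟩
    have : s.numNodes + 1 = t.numNodes + 1 := by rw [← size_ofBinary, hst, size_ofBinary]
    omega

theorem card_ofSize_le (n : ℕ) : (ofSize n).card ≤ 4 ^ n := by
  cases n with
  | zero => simp [ofSize]
  | succ n =>
    calc (ofSize (n + 1)).card
        ≤ catalan n := by
          rw [← BinaryTree.treesOfNumNodesEq_card_eq_catalan]
          exact Finset.card_image_le
      _ ≤ n.centralBinom := by
          rw [← succ_mul_catalan_eq_centralBinom]
          exact Nat.le_mul_of_pos_left _ n.succ_pos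
      _ ≤ 4 ^ n := Nat.centralBinom_le_four_pow n
      _ ≤ 4 ^ (n + 1) := Nat.pow_le_pow_right (by norm_num) n.le_succ

theorem ofSize_one : ofSize 1 = {leaf} := by
  ext u
  rw [mem_ofSize, Finset.mem_singleton]
  exact ⟨eq_leaf_of_size_eq_one, fun h => h ▸ size_leaf⟩

end UTree

/-! ### Parent structures -/

/-- A rooted tree on the vertex set `V`, given by the map sending each vertex to its parent. The
depth function certifies that iterating `parent` reaches the root; `parent root` is arbitrary. -/
structure ParentTree (V : Type*) where
  /-- The next vertex on the way to the root. -/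
  parent : V → V
  /-- The distance to the root. -/
  depth : V → ℕ
  /-- The root. -/
  root : V
  depth_root : depth root = 0
  depth_eq : ∀ v, v ≠ root → depth v = depth (parent v) + 1

namespace ParentTree

variable {V W : Type*}

theorem root_induction (P : ParentTree V) {p : V → Prop} (root : p P.root)
    (step : ∀ v, v ≠ P.root → p (P.parent v) → p v) (v : V) : p v := by
  by_cases hv : v = P.root
  · exact hv ▸ root
  · exact step v hv (root_induction P root step (P.parent v))
termination_by P.depth v
decreasing_by
  have := P.depth_eq v hv
  omega

theorem parent_ne (P : ParentTree V) {v : V} (hv : v ≠ P.root) : P.parent v ≠ v := fun h => by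
  have := P.depth_eq v hv
  rw [h] at this
  omega

theorem parent_parent_ne (P : ParentTree V) {v : V} (hv : v ≠ P.root) (hp : P.parent v ≠ P.root) :
    P.parent (P.parent v) ≠ v := fun h => by
  have h₁ := P.depth_eq v hv
  have h₂ := P.depth_eq _ hp
  rw [h] at h₂
  omega

section Children

variable [Fintype V] [Fintype W]

open scoped Classical in
/-- The set of children of a vertex. -/
noncomputable def children (P : ParentTree V) (v : V) : Finset V :=
  {w | w ≠ P.root ∧ P.parent w = v}

theorem mem_children {P : ParentTree V} {v w : V} :
    w ∈ P.children v ↔ w ≠ P.root ∧ P.parent w = v := by simp [children]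

theorem mem_children_parent (P : ParentTree V) {v : V} (hv : v ≠ P.root) :
    v ∈ P.children (P.parent v) := mem_children.2 ⟨hv, rfl⟩

theorem sup_depth_sub_lt {P : ParentTree V} {v w : V} (h : w ∈ P.children v) :
    Finset.univ.sup P.depth - P.depth w < Finset.univ.sup P.depth - P.depth v := by
  obtain ⟨hw, rfl⟩ := mem_children.1 h
  have hle : P.depth w ≤ Finset.univ.sup P.depth := Finset.le_sup (Finset.mem_univ w)
  have := P.depth_eq w hw
  omega

theorem children_induction (P : ParentTree V) {p : V → Prop}
    (h : ∀ v, (∀ w ∈ P.children v, p w) → p v) (v : V) : p v :=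
  h v fun w _ => children_induction P h w
termination_by Finset.univ.sup P.depth - P.depth v
decreasing_by exact sup_depth_sub_lt ‹_›

/-- The isomorphism type of the subtree formed by `v` and its descendants. -/
noncomputable def code (P : ParentTree V) (v : V) : UTree :=
  UTree.branches.symm ((P.children v).val.attach.map fun w => code P w.1)
termination_by Finset.univ.sup P.depth - P.depth v
decreasing_by exact sup_depth_sub_lt w.2

theorem branches_code (P : ParentTree V) (v : V) :
    (P.code v).branches = (P.children v).val.map P.code := by
  rw [code, Equiv.apply_symm_apply]
  exact Multiset.attach_map_val' (P.children v).val P.code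

theorem code_eq_iff {P : ParentTree V} {Q : ParentTree W} {v : V} {w : W} :
    P.code v = Q.code w ↔ (P.children v).val.map P.code = (Q.children w).val.map Q.code := by
  rw [← branches_code, ← branches_code, EmbeddingLike.apply_eq_iff_eq]

theorem sum_eq_of_forall_eq_add_sum_children (P : ParentTree V) {f s : V → ℕ}
    (h : ∀ v, s v = f v + ∑ w ∈ P.children v, s w) : ∑ v, f v = s P.root := by
  classical
  have hsplit : ∑ v, s v = s P.root + ∑ v with v ≠ P.root, s v := by
    rw [← Finset.add_sum_erase _ s (Finset.mem_univ P.root), Finset.filter_ne' _ P.root]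
  have hfiber : ∑ v, ∑ w ∈ P.children v, s w = ∑ v with v ≠ P.root, s v := by
    rw [← Finset.sum_fiberwise (Finset.univ.filter (· ≠ P.root)) P.parent]
    simp only [children, Finset.filter_filter]
  have hsum : ∑ v, s v = ∑ v, f v + ∑ v, ∑ w ∈ P.children v, s w := by
    rw [← Finset.sum_add_distrib]
    exact Finset.sum_congr rfl fun v _ => h v
  omega

theorem card_eq_size_code (P : ParentTree V) : Fintype.card V = (P.code P.root).size := by
  rw [← P.sum_eq_of_forall_eq_add_sum_children (f := fun _ => 1) (s := fun v => (P.code v).size)]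
  · simp
  · intro v
    rw [UTree.size_eq, branches_code, Multiset.map_map]
    rfl

theorem card_childless_eq_leaves_code (P : ParentTree V) :
    Nat.card {v // P.children v = ∅} = (P.code P.root).leaves := by
  classical
  rw [← P.sum_eq_of_forall_eq_add_sum_children (f := fun v => if P.children v = ∅ then 1 else 0)
    (s := fun v => (P.code v).leaves)]
  · rw [Nat.card_eq_fintype_card, Fintype.card_subtype, Finset.card_filter]
  · intro v
    rw [UTree.leaves_eq, UTree.branchLeaves, branches_code, Multiset.map_map]
    by_cases hv : P.children v = ∅
    · simp [hv]
    · simp [hv]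

end Children

/-! ### Codes classify rooted trees up to isomorphism -/

theorem exists_equiv_of_map_eq {α β γ : Type*} {s : Finset α} {t : Finset β} {f : α → γ}
    {g : β → γ} (h : s.val.map f = t.val.map g) : ∃ e : s ≃ t, ∀ a : s, g (e a) = f a := by
  classical
  have hcard (c : γ) :
      Fintype.card {a : s // f a = c} = Fintype.card {b : t // g b = c} := by
    have hcount := congrArg (Multiset.count c) h
    simp only [Multiset.count_map, eq_comm (a := c)] at hcount
    rw [Fintype.card_subtype, Fintype.card_subtype, Finset.univ_eq_attach, Finset.univ_eq_attach,
      Finset.filter_attach (f · = c), Finset.filter_attach (g · = c), Finset.card_map,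
      Finset.card_map, Finset.card_attach, Finset.card_attach]
    exact hcount
  exact ⟨Equiv.ofFiberEquiv fun c => Fintype.equivOfCardEq (hcard c),
    fun a => Equiv.ofFiberEquiv_map (f := fun a : s => f a) (g := fun b : t => g b) _ a⟩

section Matching

variable [Fintype V] [Fintype W]

theorem exists_children_equiv {P : ParentTree V} {Q : ParentTree W} {v : V} {w : W}
    (h : P.code v = Q.code w) :
    ∃ e : P.children v ≃ Q.children w, ∀ x : P.children v, Q.code (e x) = P.code x :=
  exists_equiv_of_map_eq (code_eq_iff.1 h)

variable (P : ParentTree V) (Q : ParentTree W) (h : P.code P.root = Q.code Q.root)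

open scoped Classical in
/-- The map between two parent structures with equal codes obtained by matching, from the root
downwards, the children of each vertex with children of its image having the same codes. -/
noncomputable def matching (v : V) : {w : W // P.code v = Q.code w} :=
  if hv : v = P.root then ⟨Q.root, hv ▸ h⟩
  else
    have e := exists_children_equiv (matching (P.parent v)).2
    ⟨e.choose ⟨v, P.mem_children_parent hv⟩,
      (e.choose_spec ⟨v, P.mem_children_parent hv⟩).symm⟩
termination_by P.depth v
decreasing_by
  have := P.depth_eq v hv
  omega

theorem matching_root : (matching P Q h P.root : W) = Q.root := by
  rw [matching, dif_pos rfl]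

theorem matching_of_mem_children {v w : V} (hw : w ∈ P.children v) :
    (matching P Q h w : W) =
      (exists_children_equiv (matching P Q h v).2).choose ⟨w, hw⟩ := by
  obtain ⟨hne, rfl⟩ := mem_children.1 hw
  rw [matching, dif_neg hne]

theorem matching_mem_children {v : V} (hv : v ≠ P.root) :
    (matching P Q h v : W) ∈ Q.children (matching P Q h (P.parent v)) := by
  rw [matching_of_mem_children P Q h (P.mem_children_parent hv)]
  exact Subtype.coe_prop _

theorem parent_matching {v : V} (hv : v ≠ P.root) :
    Q.parent (matching P Q h v) = matching P Q h (P.parent v) :=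
  (mem_children.1 (matching_mem_children P Q h hv)).2

theorem matching_eq_root_iff {v : V} : (matching P Q h v : W) = Q.root ↔ v = P.root := by
  refine ⟨fun hv => ?_, fun hv => hv ▸ matching_root P Q h⟩
  by_contra hne
  exact (mem_children.1 (matching_mem_children P Q h hne)).1 hv

theorem eq_of_matching_eq {v w : V} (hvw : (matching P Q h v : W) = matching P Q h w) :
    v = w := by
  induction v using root_induction P generalizing w with
  | root => rw [eq_comm, ← matching_eq_root_iff P Q h, ← hvw, matching_root]
  | step v hv ih =>
    have hw : w ≠ P.root := by
      rwa [ne_eq, ← matching_eq_root_iff P Q h, ← hvw, matching_eq_root_iff]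
    have hparent : P.parent v = P.parent w := ih <| by
      rw [← parent_matching P Q h hv, ← parent_matching P Q h hw, hvw]
    have hw' : w ∈ P.children (P.parent v) := mem_children.2 ⟨hw, hparent.symm⟩
    rw [matching_of_mem_children P Q h (P.mem_children_parent hv),
      matching_of_mem_children P Q h hw'] at hvw
    exact congrArg Subtype.val ((Equiv.injective _) (Subtype.ext hvw))

variable {P Q}

theorem exists_equiv_of_code_eq (h : P.code P.root = Q.code Q.root) :
    ∃ e : V ≃ W, e P.root = Q.root ∧ ∀ v, v ≠ P.root → Q.parent (e v) = e (P.parent v) := by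
  have hcard : Fintype.card V = Fintype.card W := by
    rw [card_eq_size_code, card_eq_size_code, h]
  have hbij : Function.Bijective fun v => (matching P Q h v : W) :=
    (Fintype.bijective_iff_injective_and_card _).2 ⟨fun _ _ => eq_of_matching_eq P Q h, hcard⟩
  exact ⟨.ofBijective _ hbij, matching_root P Q h, fun _ => parent_matching P Q h⟩

theorem code_eq_of_equiv (e : V ≃ W) (hroot : e P.root = Q.root)
    (hparent : ∀ v, v ≠ P.root → Q.parent (e v) = e (P.parent v)) (v : V) :
    Q.code (e v) = P.code v := by
  induction v using children_induction P with
  | h v ih =>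
    have hchildren : Q.children (e v) = (P.children v).map e.toEmbedding := by
      ext w
      obtain ⟨x, rfl⟩ := e.surjective w
      rw [Finset.mem_map_equiv, e.symm_apply_apply, mem_children, mem_children, ← hroot,
        e.injective.ne_iff]
      exact and_congr_right fun hx => by rw [hparent x hx, e.apply_eq_iff_eq]
    rw [code_eq_iff, hchildren, Finset.map_val, Multiset.map_map]
    exact Multiset.map_congr rfl ih

end Matching

/-! ### Every code is realised -/

open scoped Classical in
/-- The parent structure obtained from `P` and `Q` by making the root of `Q` a child of the root
of `P`. -/
noncomputable def graft (P : ParentTree V) (Q : ParentTree W) : ParentTree (V ⊕ W) where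
  parent := Sum.elim (fun v => .inl (P.parent v))
    fun w => if w = Q.root then .inl P.root else .inr (Q.parent w)
  depth := Sum.elim P.depth (Q.depth · + 1)
  root := .inl P.root
  depth_root := P.depth_root
  depth_eq := by
    rintro (v | w) h
    · exact P.depth_eq v fun hv => h (congrArg Sum.inl hv)
    · by_cases hw : w = Q.root
      · simp [hw, P.depth_root, Q.depth_root]
      · simp [hw, Q.depth_eq w hw]

section Graft

variable [Fintype V] [Fintype W] (P : ParentTree V) (Q : ParentTree W)

theorem children_graft_inr (w : W) :
    (graft P Q).children (.inr w) = (Q.children w).map .inr := by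
  ext (v | x)
  · simp [mem_children, graft]
  · by_cases hx : x = Q.root <;> simp [mem_children, graft, hx]

theorem children_graft_inl {v : V} (hv : v ≠ P.root) :
    (graft P Q).children (.inl v) = (P.children v).map .inl := by
  ext (x | w)
  · simp [mem_children, graft]
  · by_cases hw : w = Q.root <;> simp [mem_children, graft, hw, hv.symm]

theorem children_graft_root :
    (graft P Q).children (.inl P.root) =
      Finset.cons (.inr Q.root) ((P.children P.root).map .inl) (by simp) := by
  ext (x | w)
  · simp [mem_children, graft]
  · by_cases hw : w = Q.root <;> simp [mem_children, graft, hw]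

theorem code_graft_inr (w : W) : (graft P Q).code (.inr w) = Q.code w := by
  induction w using children_induction Q with
  | h w ih =>
    rw [code_eq_iff, children_graft_inr, Finset.map_val, Multiset.map_map]
    exact Multiset.map_congr rfl ih

theorem code_graft_inl {v : V} (hv : v ≠ P.root) :
    (graft P Q).code (.inl v) = P.code v := by
  induction v using children_induction P with
  | h v ih =>
    rw [code_eq_iff, children_graft_inl P Q hv, Finset.map_val, Multiset.map_map]
    exact Multiset.map_congr rfl fun w hw => ih w hw (mem_children.1 hw).1

theorem code_graft_root :
    (graft P Q).code (graft P Q).root = (P.code P.root).attach (Q.code Q.root) := by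
  have hchildren : (P.children P.root).val.map ((graft P Q).code ∘ Sum.inl) =
      (P.children P.root).val.map P.code :=
    Multiset.map_congr rfl fun w hw => code_graft_inl P Q (mem_children.1 hw).1
  apply UTree.branches.injective
  rw [UTree.branches_attach, branches_code, branches_code, ← hchildren, ← code_graft_inr P Q]
  change Multiset.map _ ((graft P Q).children (.inl P.root)).val = _
  rw [children_graft_root, Finset.cons_val, Multiset.map_cons, Finset.map_val, Multiset.map_map]
  rfl

end Graft

theorem exists_code_root_eq (u : UTree) :
    ∃ (V : Type) (_ : Fintype V) (P : ParentTree V), P.code P.root = u := by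
  induction u using UTree.attach_induction with
  | leaf =>
    refine ⟨Unit, inferInstance, ⟨id, 0, (), rfl, fun _ h => (h rfl).elim⟩, ?_⟩
    apply UTree.branches.injective
    rw [branches_code, UTree.branches_leaf]
    simp [children]
  | attach u c hu hc =>
    obtain ⟨V, _, P, rfl⟩ := hu
    obtain ⟨W, _, Q, rfl⟩ := hc
    exact ⟨V ⊕ W, inferInstance, graft P Q, code_graft_root P Q⟩

/-- Transport of a parent structure along an equivalence. -/
def map (P : ParentTree V) (e : V ≃ W) : ParentTree W where
  parent w := e (P.parent (e.symm w))
  depth w := P.depth (e.symm w)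
  root := e P.root
  depth_root := by rw [e.symm_apply_apply, P.depth_root]
  depth_eq w hw := by
    rw [e.symm_apply_apply, P.depth_eq _ (by rwa [ne_eq, e.symm_apply_eq])]

theorem exists_code_root_eq_of_size {u : UTree} {n : ℕ} (h : u.size = n) :
    ∃ P : ParentTree (Fin n), P.code P.root = u := by
  obtain ⟨V, _, P, rfl⟩ := exists_code_root_eq u
  let e : V ≃ Fin n := Fintype.equivFinOfCardEq (P.card_eq_size_code.trans h)
  exact ⟨P.map e, code_eq_of_equiv e rfl (fun v _ => by simp [map]) P.root⟩

/-! ### Rooted trees as graphs -/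

/-- The tree joining every vertex other than the root to its parent. -/
def graph (P : ParentTree V) : SimpleGraph V :=
  .fromRel fun v w => v ≠ P.root ∧ P.parent v = w

theorem graph_adj (P : ParentTree V) {v w : V} :
    P.graph.Adj v w ↔ v ≠ P.root ∧ P.parent v = w ∨ w ≠ P.root ∧ P.parent w = v := by
  rw [graph, fromRel_adj, and_iff_right_iff_imp]
  rintro (⟨hv, rfl⟩ | ⟨hw, rfl⟩)
  · exact (P.parent_ne hv).symm
  · exact P.parent_ne hw

theorem graph_adj_parent (P : ParentTree V) {v : V} (hv : v ≠ P.root) :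
    P.graph.Adj v (P.parent v) := P.graph_adj.2 (.inl ⟨hv, rfl⟩)

theorem graph_connected (P : ParentTree V) : P.graph.Connected := by
  have hroot (v : V) : P.graph.Reachable v P.root := by
    induction v using root_induction P with
    | root => exact .refl _
    | step v hv ih => exact (P.graph_adj_parent hv).reachable.trans ih
  exact { preconnected := fun v w => (hroot v).trans (hroot w).symm, nonempty := ⟨P.root⟩ }

theorem graph_isTree [Finite V] (P : ParentTree V) : P.graph.IsTree := by
  classical
  have := Fintype.ofFinite V
  rw [isTree_iff_connected_and_card]
  refine ⟨P.graph_connected, le_antisymm ?_ P.graph_connected.card_vert_le_card_edgeSet_add_one⟩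
  have hsub : P.graph.edgeSet ⊆ ((Finset.univ.erase P.root).image fun v => s(v, P.parent v)) := by
    intro e he
    induction e with | h v w => ?_
    rw [mem_edgeSet] at he
    rw [Finset.mem_coe, Finset.mem_image]
    obtain ⟨hv, rfl⟩ | ⟨hw, rfl⟩ := P.graph_adj.1 he
    · exact ⟨v, by simpa using hv, rfl⟩
    · exact ⟨w, by simpa using hw, Sym2.eq_swap⟩
  calc Nat.card P.graph.edgeSet + 1
      ≤ ((Finset.univ.erase P.root).image fun v => s(v, P.parent v)).card + 1 := by
        rw [← Set.ncard_coe_finset]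
        exact Nat.succ_le_succ (Set.ncard_le_ncard hsub (Finset.finite_toSet _))
    _ ≤ (Finset.univ.erase P.root).card + 1 := Nat.succ_le_succ Finset.card_image_le
    _ = Nat.card V := by
        rw [Finset.card_erase_add_one (Finset.mem_univ _), Finset.card_univ,
          Nat.card_eq_fintype_card]

theorem parent_map_of_iso {P : ParentTree V} {Q : ParentTree W} (e : P.graph ≃g Q.graph)
    (hroot : e P.root = Q.root) {v : V} (hv : v ≠ P.root) : Q.parent (e v) = e (P.parent v) := by
  induction v using root_induction P with
  | root => exact absurd rfl hv
  | step v _ ih =>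
    obtain ⟨_, h⟩ | ⟨hne, h⟩ := Q.graph_adj.1 (e.map_adj_iff.2 (P.graph_adj_parent hv))
    · exact h
    · have hparent : P.parent v ≠ P.root := fun h => hne (by rw [h, hroot])
      rw [ih hparent] at h
      exact absurd (e.injective h) (P.parent_parent_ne hv hparent)

theorem exists_graph_iso_iff [Fintype V] [Fintype W] {P : ParentTree V} {Q : ParentTree W} :
    (∃ e : P.graph ≃g Q.graph, e P.root = Q.root) ↔ P.code P.root = Q.code Q.root := by
  constructor
  · rintro ⟨e, hroot⟩
    rw [← hroot]
    exact (code_eq_of_equiv e.toEquiv hroot (fun v hv => parent_map_of_iso e hroot hv) _).symm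
  · intro h
    obtain ⟨e, hroot, hparent⟩ := exists_equiv_of_code_eq h
    have hrel (v w : V) : e v ≠ Q.root ∧ Q.parent (e v) = e w ↔ v ≠ P.root ∧ P.parent v = w := by
      rw [← hroot, e.injective.ne_iff]
      exact and_congr_right fun hv => by rw [hparent v hv, e.apply_eq_iff_eq]
    exact ⟨⟨e, by intro v w; rw [graph_adj, graph_adj, hrel, hrel]⟩, hroot⟩

theorem neighborSet_graph [Fintype V] (P : ParentTree V) {v : V}
    (hv : v ≠ P.root) : P.graph.neighborSet v = insert (P.parent v) (P.children v : Set V) := by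
  ext w
  rw [mem_neighborSet, graph_adj, Set.mem_insert_iff, Finset.mem_coe, mem_children, eq_comm]
  simp [hv]

theorem ncard_neighborSet_graph [Fintype V] (P : ParentTree V) {v : V} (hv : v ≠ P.root) :
    (P.graph.neighborSet v).ncard = (P.children v).card + 1 := by
  classical
  have hparent : P.parent v ∉ P.children v := fun h =>
    P.parent_parent_ne hv (mem_children.1 h).1 (mem_children.1 h).2
  rw [neighborSet_graph P hv, Set.ncard_insert_of_notMem (by simpa using hparent)
    (Finset.finite_toSet _), Set.ncard_coe_finset]

theorem subsingleton_of_children_root_eq_empty [Fintype V] {P : ParentTree V}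
    (h : P.children P.root = ∅) : Subsingleton V := by
  refine subsingleton_of_forall_eq P.root fun v => ?_
  induction v using root_induction P with
  | root => rfl
  | step v hv ih =>
    have hmem := P.mem_children_parent hv
    rw [ih, h] at hmem
    exact absurd hmem (Finset.notMem_empty v)

variable {n : ℕ}

/-- The rooted tree with a given parent structure. -/
def toRTree (P : ParentTree (Fin n)) : RTree n where
  adj := P.graph
  connected := P.graph_connected
  acyclic := P.graph_isTree.isAcyclic
  root := P.root

theorem isLeafV_toRTree (P : ParentTree (Fin n)) (v : Fin n) :
    IsLeafV P.toRTree v ↔ P.children v = ∅ := by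
  rw [IsLeafV]
  by_cases hv : v = P.root
  · subst hv
    constructor
    · rintro (rfl | ⟨_, h⟩)
      · refine Finset.eq_empty_of_forall_notMem fun w hw => ?_
        exact (mem_children.1 hw).1 (Subsingleton.elim _ _)
      · exact absurd rfl h
    · intro h
      have := subsingleton_of_children_root_eq_empty h
      have := P.root.pos
      exact .inl (le_antisymm (Fin.subsingleton_iff_le_one.1 ‹_›) this)
  · have hn : n ≠ 1 := by
      rintro rfl
      exact hv (Subsingleton.elim _ _)
    change n = 1 ∨ (P.graph.neighborSet v).ncard = 1 ∧ v ≠ P.root ↔ _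
    rw [ncard_neighborSet_graph P hv]
    simp [hn, hv]

theorem numLeaves_toRTree (P : ParentTree (Fin n)) :
    numLeaves P.toRTree = (P.code P.root).leaves := by
  rw [← card_childless_eq_leaves_code]
  exact Nat.card_congr (Equiv.subtypeEquivRight P.isLeafV_toRTree)

end ParentTree

namespace RTree

variable {n : ℕ}

theorem exists_adj_dist_eq (t : RTree n) {v : Fin n} (hv : v ≠ t.root) :
    ∃ w, t.adj.Adj v w ∧ t.adj.dist v t.root = t.adj.dist w t.root + 1 := by
  obtain ⟨q, hq⟩ := t.connected.exists_walk_length_eq_dist v t.root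
  cases q with
  | nil => exact absurd rfl hv
  | @cons _ w _ h q =>
    rw [Walk.length_cons] at hq
    have h₁ := dist_le q
    have h₂ := t.connected.dist_triangle (u := v) (v := w) (w := t.root)
    rw [dist_eq_one_iff_adj.2 h] at h₂
    exact ⟨w, h, by omega⟩

theorem exists_toRTree_eq (t : RTree n) : ∃ P : ParentTree (Fin n), P.toRTree = t := by
  choose! parent hadj hdist using fun v => t.exists_adj_dist_eq (v := v)
  let P : ParentTree (Fin n) := ⟨parent, (t.adj.dist · t.root), t.root, dist_self, hdist⟩
  have hle : P.graph ≤ t.adj := by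
    intro v w hvw
    obtain ⟨hv, rfl⟩ | ⟨hw, rfl⟩ := P.graph_adj.1 hvw
    · exact hadj v hv
    · exact (hadj w hw).symm
  -- A tree is minimal among the connected graphs on its vertices.
  have hmin := (isTree_iff_minimal_connected.1 ⟨t.connected, t.acyclic⟩).2 P.graph_connected hle
  have hgraph : P.graph = t.adj := hle.antisymm hmin
  obtain ⟨G, _, _, r⟩ := t
  refine ⟨P, ?_⟩
  simp only [ParentTree.toRTree, hgraph]
  rfl

/-- A parent structure representing a rooted tree. -/
noncomputable def parentTree (t : RTree n) : ParentTree (Fin n) := t.exists_toRTree_eq.choose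

theorem toRTree_parentTree (t : RTree n) : t.parentTree.toRTree = t :=
  t.exists_toRTree_eq.choose_spec

/-- The isomorphism type of a rooted tree. -/
noncomputable def code (t : RTree n) : UTree := t.parentTree.code t.parentTree.root

theorem size_code (t : RTree n) : t.code.size = n := by
  rw [code, ← ParentTree.card_eq_size_code, Fintype.card_fin]

theorem leaves_code (t : RTree n) : t.code.leaves = numLeaves t := by
  rw [code, ← ParentTree.numLeaves_toRTree, toRTree_parentTree]

theorem code_eq_iff {t t' : RTree n} : t.code = t'.code ↔ (treeSetoid n).r t t' := by
  rw [code, code, ← ParentTree.exists_graph_iso_iff]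
  conv_rhs => rw [← t.toRTree_parentTree, ← t'.toRTree_parentTree]
  rfl

theorem exists_code_eq {u : UTree} (h : u.size = n) : ∃ t : RTree n, t.code = u := by
  obtain ⟨P, rfl⟩ := ParentTree.exists_code_root_eq_of_size h
  refine ⟨P.toRTree, ?_⟩
  rw [code, ← ParentTree.exists_graph_iso_iff]
  change (treeSetoid n).r P.toRTree.parentTree.toRTree P.toRTree
  rw [toRTree_parentTree]

theorem card_quotient_numLeaves (p : ℕ → Prop) [DecidablePred p] :
    Nat.card (Quotient (Setoid.comap
      (Subtype.val : {t : RTree n // p (numLeaves t)} → RTree n) (treeSetoid n))) =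
    ((UTree.ofSize n).filter fun u => p u.leaves).card := by
  let code' (t : {t : RTree n // p (numLeaves t)}) :
      ((UTree.ofSize n).filter fun u => p u.leaves) :=
    ⟨t.1.code, by simpa [t.1.size_code, t.1.leaves_code] using t.2⟩
  have hcode (t t' : {t : RTree n // p (numLeaves t)}) :
      code' t = code' t' ↔ Setoid.comap Subtype.val (treeSetoid n) t t' :=
    Subtype.ext_iff.trans code_eq_iff
  have hbij : Function.Bijective (Quotient.lift code' fun t t' h => (hcode t t').2 h) := by
    refine ⟨fun a b => ?_, ?_⟩
    · induction a, b using Quotient.inductionOn₂ with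
      | h a b => exact fun h => Quotient.sound ((hcode a b).1 h)
    · rintro ⟨u, hu⟩
      rw [Finset.mem_filter, UTree.mem_ofSize] at hu
      obtain ⟨t, rfl⟩ := exists_code_eq hu.1
      exact ⟨Quotient.mk _ ⟨t, t.leaves_code ▸ hu.2⟩, rfl⟩
  rw [Nat.card_congr (.ofBijective _ hbij), Nat.card_eq_fintype_card, Fintype.card_coe]

end RTree

theorem aboveCount_eq_card_filter (lam : ℝ) (n : ℕ) :
    aboveCount lam n = ((UTree.ofSize n).filter fun u => lam * n < u.leaves).card :=
  RTree.card_quotient_numLeaves fun k => lam * n < k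

theorem aPlusN_eq_aboveCount (n : ℕ) : aPlusN n = aboveCount (1 / 2) n := by
  have h : aPlusN n = ((UTree.ofSize n).filter fun u => n < 2 * u.leaves).card :=
    RTree.card_quotient_numLeaves fun k => n < 2 * k
  rw [h, aboveCount_eq_card_filter]
  congr 2 with u
  rw [← @Nat.cast_lt ℝ]
  push_cast
  constructor <;> intro <;> linarith

/-! ### Leaf polynomials -/

theorem sum_le_sum_of_injOn {ι κ : Type*} {s : Finset ι} {t : Finset κ} {f : ι → ℝ} {g : κ → ℝ}
    (e : ι → κ) (he : Set.InjOn e s) (hst : ∀ i ∈ s, e i ∈ t) (hfg : ∀ i ∈ s, f i ≤ g (e i))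
    (hg : ∀ j ∈ t, 0 ≤ g j) : ∑ i ∈ s, f i ≤ ∑ j ∈ t, g j := by
  classical
  calc ∑ i ∈ s, f i ≤ ∑ i ∈ s, g (e i) := Finset.sum_le_sum hfg
    _ = ∑ j ∈ s.image e, g j := (Finset.sum_image he).symm
    _ ≤ ∑ j ∈ t, g j := Finset.sum_le_sum_of_subset_of_nonneg (Finset.image_subset_iff.2 hst)
        fun j hj _ => hg j hj

namespace UTree

/-- The number of unlabelled rooted trees with `n` vertices. -/
noncomputable def numTrees (n : ℕ) : ℕ := (ofSize n).card

/-- The generating polynomial of the number of leaves over the trees with `n` vertices. -/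
noncomputable def leafPoly (n : ℕ) (v : ℝ) : ℝ := ∑ u ∈ ofSize n, v ^ leaves u

/-- The generating polynomial of the number of leaves in the branches over the trees with `n`
vertices. It differs from `leafPoly n` only for `n = 1`. -/
noncomputable def branchLeafPoly (n : ℕ) (v : ℝ) : ℝ := ∑ u ∈ ofSize n, v ^ branchLeaves u

theorem leafPoly_one_right (n : ℕ) : leafPoly n 1 = numTrees n := by simp [leafPoly, numTrees]

theorem branchLeafPoly_zero_left (v : ℝ) : branchLeafPoly 0 v = 0 := by
  simp [branchLeafPoly, ofSize]

theorem branchLeafPoly_one_left (v : ℝ) : branchLeafPoly 1 v = 1 := by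
  simp [branchLeafPoly, ofSize_one]

theorem branchLeafPoly_eq_leafPoly {n : ℕ} (hn : 2 ≤ n) (v : ℝ) :
    branchLeafPoly n v = leafPoly n v :=
  Finset.sum_congr rfl fun u hu => by
    rw [leaves_eq_branchLeaves (hn.trans_eq (mem_ofSize.1 hu).symm)]

theorem numTrees_one : numTrees 1 = 1 := by simp [numTrees, ofSize_one]

theorem glue_injOn (i j : ℕ) :
    Set.InjOn (fun x : UTree × UTree => glue x.1 x.2) (ofSize i ×ˢ ofSize j : Finset _) := by
  intro x hx y hy hxy
  simp only [Finset.coe_product, Set.mem_prod, Finset.mem_coe, mem_ofSize] at hx hy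
  exact Prod.ext_iff.2 ((glue_inj_of_size_eq (hx.1.trans hy.1.symm) (hx.2.trans hy.2.symm)).1 hxy)

theorem numTrees_mul_le (i j : ℕ) : numTrees i * numTrees j ≤ numTrees (i + j) := by
  rw [numTrees, numTrees, ← Finset.card_product]
  refine Finset.card_le_card_of_injOn _ (fun x hx => ?_) (glue_injOn i j)
  simp_all [size_glue]

section

variable {v : ℝ}

theorem leafPoly_nonneg (n : ℕ) (hv : 1 ≤ v) : 0 ≤ leafPoly n v :=
  Finset.sum_nonneg fun _ _ => by positivity

theorem branchLeafPoly_nonneg (n : ℕ) (hv : 1 ≤ v) : 0 ≤ branchLeafPoly n v :=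
  Finset.sum_nonneg fun _ _ => by positivity

theorem numTrees_mul_branchLeafPoly_le (i j : ℕ) (hv : 1 ≤ v) :
    numTrees i * branchLeafPoly j v ≤ leafPoly (i + j) v := by
  have hprod : numTrees i * branchLeafPoly j v =
      ∑ x ∈ ofSize i ×ˢ ofSize j, v ^ branchLeaves x.2 := by
    simp [Finset.sum_product, branchLeafPoly, numTrees]
  rw [hprod]
  refine sum_le_sum_of_injOn _ (glue_injOn i j) (fun x hx => ?_) (fun x _ => ?_)
    fun _ _ => by positivity
  · simp_all [size_glue]
  · exact pow_le_pow_right₀ hv (le_of_add_le_right (branchLeaves_add_le_leaves_glue _ _))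

-- A tree with one more vertex arises by adding a leaf at the root, or by adding a new root.
theorem one_add_mul_leafPoly_le {n : ℕ} (hn : 2 ≤ n) (hv : 1 ≤ v) :
    (1 + v) * leafPoly n v ≤ leafPoly (n + 1) v := by
  have hsum : (1 + v) * leafPoly n v =
      ∑ x ∈ (ofSize n).disjSum (ofSize n), Sum.elim (v ^ leaves ·) (v * v ^ leaves ·) x := by
    rw [Finset.sum_disjSum, leafPoly, add_mul, one_mul, Finset.mul_sum]
    rfl
  rw [hsum]
  refine sum_le_sum_of_injOn (Sum.elim (attach leaf) (attach · leaf)) ?_ ?_ ?_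
    fun _ _ => by positivity
  · have hne {u w : UTree} (hw : size w = n) : leaf.attach u ≠ w.attach leaf := fun h => by
      have hcard := congrArg (Multiset.card ∘ branches) h
      have hw' : w = leaf := branches.injective (by simpa using hcard.symm)
      simp [hw'] at hw
      omega
    rintro (u | u) hu (w | w) hw h
    · exact congrArg Sum.inl (attach_right_injective leaf h)
    · exact absurd h (hne (by simpa using hw))
    · exact absurd h.symm (hne (by simpa using hu))
    · exact congrArg Sum.inr (attach_left_injective leaf h)
  · rintro (u | u) hu <;> simp_all [add_comm]
  · rintro (u | u) hu
    · simp
    · have : 2 ≤ size u := by simpa [mem_ofSize.1 (Finset.inr_mem_disjSum.1 hu)]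
      simp [leaves_eq_branchLeaves this, pow_succ']

end

theorem one_le_leafPoly_two {v : ℝ} (hv : 1 ≤ v) : 1 ≤ leafPoly 2 v := by
  simpa [numTrees_one, branchLeafPoly_one_left] using numTrees_mul_branchLeafPoly_le 1 1 hv

theorem two_pow_le_four_mul_numTrees {n : ℕ} (hn : 1 ≤ n) : (2 : ℝ) ^ n ≤ 4 * numTrees n := by
  induction n, hn using Nat.le_induction with
  | base => norm_num [numTrees_one]
  | succ n hn ih =>
    obtain rfl | hn : n = 1 ∨ 2 ≤ n := by omega
    · have := one_le_leafPoly_two le_rfl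
      rw [leafPoly_one_right] at this
      rw [one_add_one_eq_two]
      linarith
    · have := one_add_mul_leafPoly_le hn le_rfl
      rw [leafPoly_one_right, leafPoly_one_right] at this
      rw [pow_succ]
      linarith

theorem sum_pow_mul_branchLeafPoly_le {n : ℕ} (hn : 2 ≤ n) {v : ℝ} (hv : 1 ≤ v) :
    ∑ l ∈ Finset.range n, v ^ (l + 1) * branchLeafPoly (n - (l + 1)) v ≤ v * leafPoly n v := by
  have hv₀ : 0 ≤ v := by linarith
  induction n, hn using Nat.le_induction with
  | base =>
    simpa [Finset.sum_range_succ, branchLeafPoly_zero_left, branchLeafPoly_one_left]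
      using le_mul_of_one_le_right hv₀ (one_le_leafPoly_two hv)
  | succ n hn ih =>
    have hshift : ∑ l ∈ Finset.range n, v ^ (l + 1 + 1) * branchLeafPoly (n + 1 - (l + 1 + 1)) v =
        v * ∑ l ∈ Finset.range n, v ^ (l + 1) * branchLeafPoly (n - (l + 1)) v := by
      rw [Finset.mul_sum]
      refine Finset.sum_congr rfl fun l _ => ?_
      rw [Nat.add_sub_add_right]
      ring
    calc ∑ l ∈ Finset.range (n + 1), v ^ (l + 1) * branchLeafPoly (n + 1 - (l + 1)) v
        = v * (∑ l ∈ Finset.range n, v ^ (l + 1) * branchLeafPoly (n - (l + 1)) v +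
            leafPoly n v) := by
          rw [Finset.sum_range_succ', hshift, zero_add, pow_one, Nat.add_sub_cancel,
            branchLeafPoly_eq_leafPoly hn, mul_add]
      _ ≤ v * (v * leafPoly n v + leafPoly n v) := by gcongr
      _ = v * ((1 + v) * leafPoly n v) := by ring
      _ ≤ v * leafPoly (n + 1) v := by gcongr; exact one_add_mul_leafPoly_le hn hv

/-! ### Sums over the branches of all trees with `n` vertices -/

/-- The tree `u` with `l` copies of `c` added as further branches at its root. -/
noncomputable def attachCopies (l : ℕ) (c u : UTree) : UTree :=
  branches.symm (Multiset.replicate l c + branches u)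

theorem attachCopies_injective (l : ℕ) (c : UTree) : Function.Injective (attachCopies l c) :=
  branches.symm.injective.comp ((add_right_injective _).comp branches.injective)

theorem le_count_branches_iff {l : ℕ} {c u : UTree} :
    l ≤ (branches u).count c ↔ ∃ w, attachCopies l c w = u := by
  rw [Multiset.le_count_iff_replicate_le, Multiset.le_iff_exists_add]
  refine ⟨fun ⟨M, hM⟩ => ⟨branches.symm M, ?_⟩, ?_⟩
  · rw [attachCopies, Equiv.apply_symm_apply, ← hM, Equiv.symm_apply_apply]
  · rintro ⟨w, rfl⟩
    exact ⟨branches w, branches.apply_symm_apply _⟩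

theorem attachCopies_succ (l : ℕ) (c u : UTree) :
    attachCopies (l + 1) c u = (attachCopies l c u).attach c := by
  rw [attachCopies, attachCopies, attach, Equiv.apply_symm_apply, Multiset.replicate_succ,
    Multiset.cons_add]

theorem size_attachCopies (l : ℕ) (c u : UTree) :
    size (attachCopies l c u) = size u + l * size c := by
  induction l with
  | zero => simp [attachCopies]
  | succ l ih => rw [attachCopies_succ, size_attach, ih]; ring

theorem branchLeaves_attachCopies (l : ℕ) (c u : UTree) :
    branchLeaves (attachCopies l c u) = branchLeaves u + l * leaves c := by
  induction l with
  | zero => simp [attachCopies]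
  | succ l ih => rw [attachCopies_succ, branchLeaves_attach, ih]; ring

theorem leaves_attachCopies_succ (l : ℕ) (c u : UTree) :
    leaves (attachCopies (l + 1) c u) = branchLeaves u + (l + 1) * leaves c := by
  rw [attachCopies_succ, leaves_attach, ← branchLeaves_attach, ← attachCopies_succ,
    branchLeaves_attachCopies]

theorem sum_pow_leaves_filter_count (n l : ℕ) (c : UTree) (v : ℝ) :
    ∑ u ∈ ofSize n with l < (branches u).count c, v ^ leaves u =
      (v ^ (l + 1)) ^ leaves c * branchLeafPoly (n - (l + 1) * size c) v := by
  classical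
  have himage : {u ∈ ofSize n | l < (branches u).count c} =
      (ofSize (n - (l + 1) * size c)).image (attachCopies (l + 1) c) := by
    ext u
    rw [Finset.mem_filter, Nat.lt_iff_add_one_le, le_count_branches_iff, mem_ofSize,
      Finset.mem_image]
    constructor
    · rintro ⟨hu, w, rfl⟩
      rw [size_attachCopies] at hu
      exact ⟨w, mem_ofSize.2 (by omega), rfl⟩
    · rintro ⟨w, hw, rfl⟩
      have := size_pos w
      rw [mem_ofSize] at hw
      exact ⟨by rw [size_attachCopies]; omega, w, rfl⟩
  rw [himage, Finset.sum_image (attachCopies_injective _ _).injOn, branchLeafPoly, Finset.mul_sum]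
  refine Finset.sum_congr rfl fun w _ => ?_
  rw [leaves_attachCopies_succ, pow_add, ← pow_mul, mul_comm]

theorem sum_map_branches (f : UTree → ℝ) {n : ℕ} {u : UTree} (hu : size u = n) :
    ((branches u).map f).sum = ∑ m ∈ Finset.range n, ∑ c ∈ ofSize m, ∑ l ∈ Finset.range n,
      if l < (branches u).count c then f c else 0 := by
  classical
  have hmult (c : UTree) : ∑ l ∈ Finset.range n, (if l < (branches u).count c then f c else 0) =
      (branches u).count c • f c := by
    have hle : (branches u).count c ≤ n := by
      obtain ⟨w, hw⟩ := le_count_branches_iff.1 (le_refl ((branches u).count c))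
      have hsize := congrArg size hw
      rw [size_attachCopies] at hsize
      have := Nat.le_mul_of_pos_right ((branches u).count c) (size_pos c)
      omega
    have hfilter : {l ∈ Finset.range n | l < (branches u).count c} =
        Finset.range ((branches u).count c) := by
      ext l
      simpa using fun h => h.trans_le hle
    rw [← Finset.sum_filter, hfilter, Finset.sum_const, Finset.card_range]
  simp only [hmult]
  rw [← Finset.sum_biUnion, Finset.sum_multiset_map_count]
  · refine Finset.sum_subset (fun c hc => ?_) fun c _ hc => ?_
    · have := size_lt_of_mem_branches (Multiset.mem_toFinset.1 hc)
      simp only [Finset.mem_biUnion, Finset.mem_range, mem_ofSize]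
      exact ⟨size c, by omega, rfl⟩
    · rw [Multiset.count_eq_zero_of_notMem (by simpa using hc), zero_smul]
  · intro a _ b _ hab
    rw [Function.onFun, Finset.disjoint_left]
    simp only [mem_ofSize]
    exact fun c ha hb => hab (ha.symm.trans hb)

theorem sum_sum_map_branches_mul_pow_leaves (f : UTree → ℝ) (n : ℕ) (v : ℝ) :
    ∑ u ∈ ofSize n, ((branches u).map f).sum * v ^ leaves u =
      ∑ m ∈ Finset.range n, ∑ l ∈ Finset.range n,
        (∑ c ∈ ofSize m, f c * (v ^ (l + 1)) ^ leaves c) *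
          branchLeafPoly (n - (l + 1) * m) v := by
  have hinner {m : ℕ} (l : ℕ) {c : UTree} (hc : c ∈ ofSize m) :
      ∑ u ∈ ofSize n, (if l < (branches u).count c then f c else 0) * v ^ leaves u =
        f c * (v ^ (l + 1)) ^ leaves c * branchLeafPoly (n - (l + 1) * m) v := by
    rw [mul_assoc, ← mem_ofSize.1 hc, ← sum_pow_leaves_filter_count, Finset.mul_sum,
      Finset.sum_filter]
    simp only [ite_mul, zero_mul]
  calc ∑ u ∈ ofSize n, ((branches u).map f).sum * v ^ leaves u
      = ∑ u ∈ ofSize n, ∑ m ∈ Finset.range n, ∑ l ∈ Finset.range n, ∑ c ∈ ofSize m,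
          (if l < (branches u).count c then f c else 0) * v ^ leaves u := by
        refine Finset.sum_congr rfl fun u hu => ?_
        simp only [sum_map_branches f (mem_ofSize.1 hu), Finset.sum_mul]
        exact Finset.sum_congr rfl fun m _ => Finset.sum_comm
    _ = ∑ m ∈ Finset.range n, ∑ l ∈ Finset.range n, ∑ c ∈ ofSize m, ∑ u ∈ ofSize n,
          (if l < (branches u).count c then f c else 0) * v ^ leaves u := by
        rw [Finset.sum_comm]
        refine Finset.sum_congr rfl fun m _ => ?_
        rw [Finset.sum_comm]
        exact Finset.sum_congr rfl fun l _ => Finset.sum_comm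
    _ = _ := by
        simp only [Finset.sum_mul]
        exact Finset.sum_congr rfl fun m _ => Finset.sum_congr rfl fun l _ =>
          Finset.sum_congr rfl fun c hc => hinner l hc

/-! ### The deviation of the number of leaves -/

/-- The excess of the number of leaves of `u` over the proportion `θ` of its vertices. -/
noncomputable def excess (θ : ℝ) (u : UTree) : ℝ := leaves u - θ * size u

/-- The total excess over the trees with `n` vertices, weighted by `v` to the number of leaves. -/
noncomputable def leafDeviation (θ : ℝ) (n : ℕ) (v : ℝ) : ℝ :=
  ∑ u ∈ ofSize n, excess θ u * v ^ leaves u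

theorem branchLeaves_sub_mul_size (θ : ℝ) (u : UTree) :
    branchLeaves u - θ * size u = ((branches u).map (excess θ)).sum - θ := by
  induction u using attach_induction with
  | leaf => simp
  | attach u c hu _ =>
    simp only [branchLeaves_attach, size_attach, branches_attach, Multiset.map_cons,
      Multiset.sum_cons, excess]
    push_cast
    linear_combination hu

theorem excess_eq (θ : ℝ) {u : UTree} (hu : 2 ≤ size u) :
    excess θ u = ((branches u).map (excess θ)).sum - θ := by
  rw [excess, leaves_eq_branchLeaves hu, branchLeaves_sub_mul_size]

theorem leafDeviation_eq {n : ℕ} (hn : 2 ≤ n) (θ v : ℝ) :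
    leafDeviation θ n v =
      ∑ m ∈ Finset.range n, ∑ l ∈ Finset.range n,
        leafDeviation θ m (v ^ (l + 1)) * branchLeafPoly (n - (l + 1) * m) v -
      θ * leafPoly n v := by
  have hexcess : leafDeviation θ n v =
      ∑ u ∈ ofSize n, (((branches u).map (excess θ)).sum * v ^ leaves u - θ * v ^ leaves u) :=
    Finset.sum_congr rfl fun u hu => by
      rw [excess_eq θ (hn.trans_eq (mem_ofSize.1 hu).symm), sub_mul]
  rw [hexcess, Finset.sum_sub_distrib, ← Finset.mul_sum, sum_sum_map_branches_mul_pow_leaves]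
  rfl

theorem leafDeviation_one_left (θ v : ℝ) : leafDeviation θ 1 v = (1 - θ) * v := by
  simp [leafDeviation, ofSize_one, excess]

variable {θ v : ℝ} {n : ℕ}

theorem leafDeviation_le_add_sum (hn : 2 ≤ n) (hθ : θ ≤ 1) (hv : 1 ≤ v) :
    leafDeviation θ n v ≤ ((1 - θ) * v - θ) * leafPoly n v +
      ∑ m ∈ Finset.Ico 2 n, ∑ l ∈ Finset.range n,
        leafDeviation θ m (v ^ (l + 1)) * branchLeafPoly (n - (l + 1) * m) v := by
  have hzero : ∑ l ∈ Finset.range n,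
      leafDeviation θ 0 (v ^ (l + 1)) * branchLeafPoly (n - (l + 1) * 0) v = 0 :=
    Finset.sum_eq_zero fun l _ => by simp [leafDeviation, ofSize]
  have hone : ∑ l ∈ Finset.range n,
      leafDeviation θ 1 (v ^ (l + 1)) * branchLeafPoly (n - (l + 1) * 1) v ≤
        (1 - θ) * (v * leafPoly n v) := by
    simp only [leafDeviation_one_left, mul_assoc, mul_one, ← Finset.mul_sum]
    exact mul_le_mul_of_nonneg_left (sum_pow_mul_branchLeafPoly_le hn hv) (by linarith)
  have hsplit (f : ℕ → ℝ) :
      ∑ m ∈ Finset.range n, f m = f 0 + (f 1 + ∑ m ∈ Finset.Ico 2 n, f m) := by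
    rw [Finset.range_eq_Ico, Finset.sum_eq_sum_Ico_succ_bot (by omega),
      Finset.sum_eq_sum_Ico_succ_bot (by omega)]
  rw [leafDeviation_eq hn, hsplit, hzero]
  linarith

theorem leafDeviation_le (hθ : 0 ≤ θ) (hv : 1 ≤ v) :
    leafDeviation θ n v ≤ leafDeviation θ n 1 + n * (v ^ n - 1) * numTrees n := by
  have hconst : n * (v ^ n - 1) * numTrees n = ∑ u ∈ ofSize n, (n : ℝ) * (v ^ n - 1) := by
    rw [Finset.sum_const, nsmul_eq_mul, numTrees, mul_comm]
  rw [hconst, leafDeviation, leafDeviation, ← Finset.sum_add_distrib]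
  refine Finset.sum_le_sum fun u hu => ?_
  obtain rfl := mem_ofSize.1 hu
  have hexcess : excess θ u ≤ size u :=
    (sub_le_self _ (by positivity)).trans (Nat.cast_le.2 (leaves_le_size u))
  have hpow : v ^ leaves u ≤ v ^ size u := pow_le_pow_right₀ hv (leaves_le_size u)
  have hone : 1 ≤ v ^ leaves u := one_le_pow₀ hv
  have hmul : excess θ u * (v ^ leaves u - 1) ≤ size u * (v ^ size u - 1) :=
    mul_le_mul hexcess (by linarith) (by linarith) (by positivity)
  rw [one_pow]
  linarith

/-- The coefficients of the error term in the recurrence for `leafDeviation`. -/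
noncomputable def errorCoeff (m l : ℕ) : ℝ :=
  6 * ((m ^ 2 * (3 / 4) ^ m) * ((l + 1) * (3 / 4) ^ l))

theorem errorCoeff_nonneg (m l : ℕ) : 0 ≤ errorCoeff m l := by
  unfold errorCoeff
  positivity

theorem summable_errorCoeff : Summable fun p : ℕ × ℕ => errorCoeff p.1 p.2 := by
  have hr : ‖(3 / 4 : ℝ)‖ < 1 := by norm_num
  have hl : Summable fun l : ℕ => ((l : ℝ) + 1) * (3 / 4) ^ l := by
    simpa [add_mul] using (summable_pow_mul_geometric_of_norm_lt_one 1 hr).add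
      (summable_geometric_of_norm_lt_one hr)
  exact ((summable_pow_mul_geometric_of_norm_lt_one 2 hr).mul_of_nonneg hl
    (fun _ => by positivity) fun _ => by positivity).mul_left 6

theorem sum_errorCoeff_le (s t : Finset ℕ) :
    ∑ m ∈ s, ∑ l ∈ t, errorCoeff m l ≤ ∑' p : ℕ × ℕ, errorCoeff p.1 p.2 := by
  rw [← Finset.sum_product']
  exact summable_errorCoeff.sum_le_tsum _ fun p _ => errorCoeff_nonneg p.1 p.2

theorem pow_sub_one_le_sub_one_mul (hv : 1 ≤ v) (k : ℕ) : v ^ k - 1 ≤ (v - 1) * (k * v ^ k) := by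
  rw [← mul_geom_sum]
  refine mul_le_mul_of_nonneg_left ?_ (sub_nonneg.2 hv)
  simpa using Finset.sum_le_card_nsmul (Finset.range k) (v ^ ·) (v ^ k) fun i hi =>
    pow_le_pow_right₀ hv (Finset.mem_range.1 hi).le

theorem pow_le_two_pow_mul (hv : 1 ≤ v) (hv' : v ≤ 6 / 5) {m l : ℕ} (hm : 1 ≤ m) (hl : 1 ≤ l) :
    v ^ ((l + 1) * m) ≤ 2 ^ (l * m) * (4 / 3 * ((3 / 4) ^ m * (3 / 4) ^ l)) := by
  have hlm : l * m + 1 ≥ m + l := by nlinarith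
  calc v ^ ((l + 1) * m) ≤ v ^ (2 * (l * m)) := pow_le_pow_right₀ hv (by nlinarith)
    _ = (v ^ 2) ^ (l * m) := pow_mul ..
    _ ≤ (2 * (3 / 4)) ^ (l * m) := by gcongr; nlinarith
    _ = 2 ^ (l * m) * (4 / 3 * (3 / 4) ^ (l * m + 1)) := by rw [mul_pow, pow_succ]; ring
    _ ≤ 2 ^ (l * m) * (4 / 3 * (3 / 4) ^ (m + l)) := by
        gcongr 2 ^ (l * m) * (4 / 3 * ?_)
        exact pow_le_pow_of_le_one (by norm_num) (by norm_num) hlm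
    _ = 2 ^ (l * m) * (4 / 3 * ((3 / 4) ^ m * (3 / 4) ^ l)) := by rw [pow_add]

theorem numTrees_mul_two_pow_mul_branchLeafPoly_le (hv : 1 ≤ v) (m : ℕ) {k : ℕ} (hk : 1 ≤ k) :
    numTrees m * 2 ^ k * branchLeafPoly (n - (m + k)) v ≤ 4 * leafPoly n v := by
  obtain hlt | hle := lt_or_ge n (m + k)
  · rw [Nat.sub_eq_zero_of_le hlt.le, branchLeafPoly_zero_left, mul_zero]
    exact mul_nonneg (by norm_num) (leafPoly_nonneg n hv)
  have hO := branchLeafPoly_nonneg (n - (m + k)) hv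
  have hsupermul : (numTrees m * numTrees k : ℝ) ≤ numTrees (m + k) :=
    mod_cast numTrees_mul_le m k
  calc numTrees m * 2 ^ k * branchLeafPoly (n - (m + k)) v
      ≤ numTrees m * (4 * numTrees k) * branchLeafPoly (n - (m + k)) v := by
        gcongr
        exact two_pow_le_four_mul_numTrees hk
    _ = 4 * (numTrees m * numTrees k * branchLeafPoly (n - (m + k)) v) := by ring
    _ ≤ 4 * (numTrees (m + k) * branchLeafPoly (n - (m + k)) v) := by gcongr
    _ ≤ 4 * leafPoly n v := by
        have := numTrees_mul_branchLeafPoly_le (m + k) (n - (m + k)) hv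
        rw [Nat.add_sub_cancel' hle] at this
        linarith

theorem leafDeviation_pow_mul_branchLeafPoly_le (hθ : 0 ≤ θ) (hv : 1 ≤ v) (hv' : v ≤ 6 / 5)
    {m : ℕ} (hm : 1 ≤ m) (hone : leafDeviation θ m 1 ≤ 0) (hdev : leafDeviation θ m v ≤ 0)
    (l : ℕ) :
    leafDeviation θ m (v ^ (l + 1)) * branchLeafPoly (n - (l + 1) * m) v ≤
      (v - 1) * errorCoeff m l * leafPoly n v := by
  have hA := leafPoly_nonneg n hv
  have hO := branchLeafPoly_nonneg (n - (l + 1) * m) hv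
  have hv₀ : 0 ≤ v - 1 := sub_nonneg.2 hv
  obtain rfl | hl : l = 0 ∨ 1 ≤ l := by omega
  · rw [zero_add, pow_one] at *
    exact (mul_nonpos_of_nonpos_of_nonneg hdev hO).trans
      (mul_nonneg (mul_nonneg hv₀ (errorCoeff_nonneg m 0)) hA)
  have hpow : v ^ ((l + 1) * m) - 1 ≤ (v - 1) *
      ((l + 1) * m * (2 ^ (l * m) * (4 / 3 * ((3 / 4) ^ m * (3 / 4) ^ l)))) := by
    refine (pow_sub_one_le_sub_one_mul hv _).trans ?_
    push_cast
    gcongr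
    exact pow_le_two_pow_mul hv hv' hm hl
  have htrees := numTrees_mul_two_pow_mul_branchLeafPoly_le (n := n) hv m
    (Nat.mul_pos hl hm : 1 ≤ l * m)
  rw [show m + l * m = (l + 1) * m by ring] at htrees
  have hle := leafDeviation_le (n := m) hθ (one_le_pow₀ hv : 1 ≤ v ^ (l + 1))
  rw [← pow_mul] at hle
  calc leafDeviation θ m (v ^ (l + 1)) * branchLeafPoly (n - (l + 1) * m) v
      ≤ m * (v ^ ((l + 1) * m) - 1) * numTrees m * branchLeafPoly (n - (l + 1) * m) v := by
        gcongr
        linarith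
    _ ≤ m * ((v - 1) * ((l + 1) * m * (2 ^ (l * m) * (4 / 3 * ((3 / 4) ^ m * (3 / 4) ^ l))))) *
          numTrees m * branchLeafPoly (n - (l + 1) * m) v := by gcongr
    _ = (v - 1) * (4 / 3 * ((m ^ 2 * (3 / 4) ^ m) * ((l + 1) * (3 / 4) ^ l))) *
          (numTrees m * 2 ^ (l * m) * branchLeafPoly (n - (l + 1) * m) v) := by ring
    _ ≤ (v - 1) * (4 / 3 * ((m ^ 2 * (3 / 4) ^ m) * ((l + 1) * (3 / 4) ^ l))) *
          (4 * leafPoly n v) := by gcongr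
    _ ≤ (v - 1) * errorCoeff m l * leafPoly n v := by
        have : (0 : ℝ) ≤ (v - 1) * ((m ^ 2 * (3 / 4) ^ m) * ((l + 1) * (3 / 4) ^ l)) *
          leafPoly n v := by positivity
        rw [errorCoeff]
        linarith

theorem leafDeviation_le_mul_leafPoly (hn : 2 ≤ n) (hθ : 0 ≤ θ) (hθ' : θ ≤ 1) (hv : 1 ≤ v)
    (hv' : v ≤ 6 / 5) (hone : ∀ m ∈ Finset.Ico 2 n, leafDeviation θ m 1 ≤ 0)
    (hdev : ∀ m ∈ Finset.Ico 2 n, leafDeviation θ m v ≤ 0) :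
    leafDeviation θ n v ≤
      ((1 - θ) * v - θ + (v - 1) * ∑' p : ℕ × ℕ, errorCoeff p.1 p.2) * leafPoly n v := by
  have hA := leafPoly_nonneg n hv
  have := sub_nonneg.2 hv
  calc leafDeviation θ n v
      ≤ ((1 - θ) * v - θ) * leafPoly n v + ∑ m ∈ Finset.Ico 2 n, ∑ l ∈ Finset.range n,
          (v - 1) * errorCoeff m l * leafPoly n v := by
        refine (leafDeviation_le_add_sum hn hθ' hv).trans (add_le_add_right ?_ _)
        refine Finset.sum_le_sum fun m hm => Finset.sum_le_sum fun l _ => ?_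
        exact leafDeviation_pow_mul_branchLeafPoly_le hθ hv hv'
          (one_le_two.trans (Finset.mem_Ico.1 hm).1) (hone m hm) (hdev m hm) l
    _ = ((1 - θ) * v - θ + (v - 1) *
          ∑ m ∈ Finset.Ico 2 n, ∑ l ∈ Finset.range n, errorCoeff m l) * leafPoly n v := by
        simp only [← Finset.sum_mul, ← Finset.mul_sum]
        ring
    _ ≤ _ := by
        gcongr
        exact sum_errorCoeff_le _ _

theorem leafDeviation_one_nonpos (hn : 2 ≤ n) (hθ : 1 / 2 ≤ θ) (hθ' : θ ≤ 1) :
    leafDeviation θ n 1 ≤ 0 := by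
  induction n using Nat.strong_induction_on with
  | _ n ih =>
    have hlt : ∀ m ∈ Finset.Ico 2 n, leafDeviation θ m 1 ≤ 0 := fun m hm =>
      ih m (Finset.mem_Ico.1 hm).2 (Finset.mem_Ico.1 hm).1
    refine (leafDeviation_le_mul_leafPoly hn (by linarith) hθ' le_rfl (by norm_num) hlt hlt).trans
      (mul_nonpos_of_nonpos_of_nonneg ?_ (leafPoly_nonneg n le_rfl))
    linarith

theorem leafDeviation_nonpos (hn : 2 ≤ n) (hθ : 1 / 2 ≤ θ) (hθ' : θ ≤ 1) (hv : 1 ≤ v)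
    (hv' : v ≤ 6 / 5)
    (hvθ : (1 - θ) * v + (v - 1) * ∑' p : ℕ × ℕ, errorCoeff p.1 p.2 ≤ θ) :
    leafDeviation θ n v ≤ 0 := by
  induction n using Nat.strong_induction_on with
  | _ n ih =>
    refine (leafDeviation_le_mul_leafPoly hn (by linarith) hθ' hv hv'
      (fun m hm => leafDeviation_one_nonpos (Finset.mem_Ico.1 hm).1 hθ hθ')
      fun m hm => ih m (Finset.mem_Ico.1 hm).2 (Finset.mem_Ico.1 hm).1).trans
      (mul_nonpos_of_nonpos_of_nonneg ?_ (leafPoly_nonneg n hv))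
    linarith

theorem exists_leafDeviation_nonpos (hθ : 1 / 2 < θ) (hθ' : θ ≤ 1) :
    ∃ v : ℝ, 1 < v ∧ ∀ n, 2 ≤ n → leafDeviation θ n v ≤ 0 := by
  have hev : ∀ᶠ v in nhdsWithin (1 : ℝ) (Set.Ioi 1), v ≤ 6 / 5 ∧
      (1 - θ) * v + (v - 1) * ∑' p : ℕ × ℕ, errorCoeff p.1 p.2 ≤ θ := by
    refine Filter.Eventually.filter_mono nhdsWithin_le_nhds (Filter.Eventually.and ?_ ?_)
    · exact (eventually_lt_nhds (by norm_num)).mono fun _ => le_of_lt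
    · have hcont : Continuous fun v : ℝ =>
          (1 - θ) * v + (v - 1) * ∑' p : ℕ × ℕ, errorCoeff p.1 p.2 := by fun_prop
      refine (hcont.continuousAt.eventually_lt_const ?_).mono fun _ => le_of_lt
      linarith
  obtain ⟨v, ⟨hv', hvθ⟩, hv⟩ := (hev.and self_mem_nhdsWithin).exists
  exact ⟨v, hv, fun n hn => leafDeviation_nonpos hn hθ.le hθ' (le_of_lt hv) hv' hvθ⟩

/-! ### A Chernoff bound for the number of leaves -/

theorem rpow_excess_le (hv : 0 < v) (θ : ℝ) (u : UTree) :
    v ^ excess θ u ≤ 1 + Real.log v * v ^ (-(θ * size u)) * (excess θ u * v ^ leaves u) := by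
  have hpow : v ^ excess θ u = v ^ (-(θ * size u)) * v ^ leaves u := by
    rw [excess, ← Real.rpow_natCast, ← Real.rpow_add hv, neg_add_eq_sub]
  have hinv : 1 - Real.log v * excess θ u ≤ v ^ (-excess θ u) := by
    rw [Real.rpow_def_of_pos hv]
    have := Real.add_one_le_exp (Real.log v * -excess θ u)
    linarith
  have hmul : (1 - Real.log v * excess θ u) * v ^ excess θ u ≤ 1 := by
    refine (mul_le_mul_of_nonneg_right hinv (by positivity)).trans_eq ?_
    rw [← Real.rpow_add hv, neg_add_cancel, Real.rpow_zero]
  linear_combination hmul + Real.log v * excess θ u * hpow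

theorem sum_rpow_excess_le (hv : 1 ≤ v) (hdev : leafDeviation θ n v ≤ 0) :
    ∑ u ∈ ofSize n, v ^ excess θ u ≤ numTrees n := by
  have hv₀ : 0 < v := one_pos.trans_le hv
  calc ∑ u ∈ ofSize n, v ^ excess θ u
      ≤ ∑ u ∈ ofSize n, (1 + Real.log v * v ^ (-(θ * n)) * (excess θ u * v ^ leaves u)) :=
        Finset.sum_le_sum fun u hu => by
          rw [← mem_ofSize.1 hu]
          exact rpow_excess_le hv₀ θ u
    _ = numTrees n + Real.log v * v ^ (-(θ * n)) * leafDeviation θ n v := by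
        rw [Finset.sum_add_distrib, ← Finset.mul_sum, Finset.sum_const, nsmul_one, numTrees,
          leafDeviation]
    _ ≤ numTrees n := add_le_of_nonpos_right <| mul_nonpos_of_nonneg_of_nonpos
        (mul_nonneg (Real.log_nonneg hv) (by positivity)) hdev

end UTree

theorem aboveCount_mul_rpow_le {θ v : ℝ} {n : ℕ} (hv : 1 ≤ v)
    (hdev : UTree.leafDeviation θ n v ≤ 0) (lam : ℝ) :
    aboveCount lam n * v ^ ((lam - θ) * n) ≤ UTree.numTrees n := by
  calc aboveCount lam n * v ^ ((lam - θ) * n)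
      = ∑ u ∈ UTree.ofSize n with lam * n < u.leaves, v ^ ((lam - θ) * n) := by
        rw [Finset.sum_const, nsmul_eq_mul, aboveCount_eq_card_filter]
    _ ≤ ∑ u ∈ UTree.ofSize n with lam * n < u.leaves, v ^ u.excess θ := by
        refine Finset.sum_le_sum fun u hu => Real.rpow_le_rpow_of_exponent_le hv ?_
        rw [Finset.mem_filter, UTree.mem_ofSize] at hu
        rw [UTree.excess, hu.1]
        linarith [hu.2]
    _ ≤ ∑ u ∈ UTree.ofSize n, v ^ u.excess θ :=
        Finset.sum_le_sum_of_subset_of_nonneg (Finset.filter_subset _ _) fun _ _ _ => by positivity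
    _ ≤ UTree.numTrees n := UTree.sum_rpow_excess_le hv hdev

/-! ### Counting trees with many leaves -/

theorem aboveCount_zero_left (n : ℕ) : aboveCount 0 n = UTree.numTrees n := by
  rw [aboveCount_eq_card_filter, UTree.numTrees, Finset.filter_true_of_mem]
  intro u _
  simpa using UTree.leaves_pos u

theorem aboveCount_le_numTrees (lam : ℝ) (n : ℕ) : aboveCount lam n ≤ UTree.numTrees n := by
  rw [aboveCount_eq_card_filter]
  exact Finset.card_filter_le _ _

theorem aboveCount_mul_le {p q : ℕ} (hp : 2 ≤ p) (hq : 2 ≤ q) {a b c : ℝ}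
    (h : c * (p + q) ≤ a * p + b * q) :
    aboveCount a p * aboveCount b q ≤ aboveCount c (p + q) := by
  simp only [aboveCount_eq_card_filter]
  rw [← Finset.card_product]
  refine Finset.card_le_card_of_injOn (fun x => UTree.glue x.1 x.2) (fun x hx => ?_)
    ((UTree.glue_injOn p q).mono fun x hx => ?_) <;>
  simp only [Finset.coe_product, Finset.coe_filter, UTree.mem_ofSize, Set.mem_prod,
    Set.mem_ofPred_eq, Finset.mem_coe] at hx ⊢
  · obtain ⟨⟨hx₁, hx₂⟩, hy₁, hy₂⟩ := hx
    refine ⟨by rw [UTree.size_glue, hx₁, hy₁], ?_⟩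
    have hle := UTree.branchLeaves_add_le_leaves_glue x.1 x.2
    rw [← UTree.leaves_eq_branchLeaves (hp.trans_eq hx₁.symm),
      ← UTree.leaves_eq_branchLeaves (hq.trans_eq hy₁.symm), ← Nat.cast_le (α := ℝ)] at hle
    push_cast at hle ⊢
    linarith
  · exact ⟨hx.1.1, hx.2.1⟩

theorem aboveCount_le_aboveCount_succ {a : ℝ} (ha : a ≤ 1) {n : ℕ} (hn : 2 ≤ n) :
    aboveCount a n ≤ aboveCount a (n + 1) := by
  simp only [aboveCount_eq_card_filter]
  refine Finset.card_le_card_of_injOn (UTree.attach · UTree.leaf) (fun u hu => ?_)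
    (UTree.attach_left_injective _).injOn
  simp only [Finset.coe_filter, UTree.mem_ofSize, Set.mem_ofPred_eq] at hu ⊢
  rw [UTree.size_attach, UTree.leaves_attach, UTree.size_leaf, UTree.leaves_leaf,
    ← UTree.leaves_eq_branchLeaves (hn.trans_eq hu.1.symm), hu.1]
  push_cast
  exact ⟨rfl, by linarith⟩

theorem aboveCount_pos {a : ℝ} {n : ℕ} (h : a * (n + 2) < n + 1) : 0 < aboveCount a (n + 2) := by
  rw [aboveCount_eq_card_filter]
  refine Finset.card_pos.2 ⟨UTree.attachCopies (n + 1) UTree.leaf UTree.leaf, ?_⟩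
  rw [Finset.mem_filter, UTree.mem_ofSize, UTree.size_attachCopies,
    UTree.leaves_attachCopies_succ]
  simp only [UTree.size_leaf, UTree.leaves_leaf, UTree.branchLeaves_leaf]
  push_cast
  exact ⟨by ring, by linarith⟩

theorem eventually_aboveCount_pos {a : ℝ} (ha : a < 1) :
    ∀ᶠ n in Filter.atTop, 0 < aboveCount a n := by
  rw [← Filter.map_add_atTop_eq_nat 2, Filter.eventually_map]
  filter_upwards [tendsto_natCast_atTop_atTop.eventually_gt_atTop ((2 * a - 1) / (1 - a))]
    with n hn
  rw [div_lt_iff₀ (by linarith)] at hn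
  exact aboveCount_pos (by linarith)

/-! ### The exponential growth rate -/

/-- The logarithm of the number of rooted trees with `n` vertices and more than `a * n` leaves,
with value `0` if there is none. -/
noncomputable def logCount (a : ℝ) (n : ℕ) : ℝ := Real.log (aboveCount a n)

theorem logCount_nonneg (a : ℝ) (n : ℕ) : 0 ≤ logCount a n := Real.log_natCast_nonneg _

theorem logCount_eq_zero {a : ℝ} {n : ℕ} (h : aboveCount a n ≤ 1) : logCount a n = 0 := by
  unfold logCount
  interval_cases aboveCount a n <;> simp

theorem logCount_le (a : ℝ) (n : ℕ) : logCount a n ≤ n * Real.log 4 := by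
  obtain hzero | hpos := (aboveCount a n).eq_zero_or_pos
  · rw [logCount_eq_zero (hzero.trans_le zero_le_one)]
    positivity
  · rw [logCount, ← Real.log_pow]
    refine Real.log_le_log (mod_cast hpos) ?_
    exact_mod_cast (aboveCount_le_numTrees a n).trans (UTree.card_ofSize_le n)

theorem two_le_of_one_lt_aboveCount {a : ℝ} {n : ℕ} (h : 1 < aboveCount a n) : 2 ≤ n := by
  by_contra! hn
  have hle := h.trans_le (aboveCount_le_numTrees a n)
  interval_cases n <;> simp [UTree.numTrees, UTree.ofSize] at hle

theorem logCount_monotone {a : ℝ} (ha : a ≤ 1) : Monotone (logCount a) := by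
  refine monotone_nat_of_le_succ fun n => ?_
  obtain hle | hlt := le_or_gt (aboveCount a n) 1
  · rw [logCount_eq_zero hle]
    exact logCount_nonneg _ _
  · refine Real.log_le_log (mod_cast one_pos.trans hlt) ?_
    exact_mod_cast aboveCount_le_aboveCount_succ ha (two_le_of_one_lt_aboveCount hlt)

theorem logCount_add_le {p q : ℕ} (hp : 2 ≤ p) (hq : 2 ≤ q) {a b c : ℝ}
    (h : c * (p + q) ≤ a * p + b * q) (hp' : 0 < aboveCount a p) (hq' : 0 < aboveCount b q) :
    logCount a p + logCount b q ≤ logCount c (p + q) := by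
  rw [logCount, logCount, ← Real.log_mul (mod_cast hp'.ne') (mod_cast hq'.ne')]
  refine Real.log_le_log (mod_cast Nat.mul_pos hp' hq') ?_
  exact_mod_cast aboveCount_mul_le hp hq h

theorem subadditive_neg_logCount {a : ℝ} (ha : a ≤ 1) :
    Subadditive fun n => -logCount a n := fun p q => by
  suffices logCount a p + logCount a q ≤ logCount a (p + q) by linarith
  obtain hp | hp := le_or_gt (aboveCount a p) 1
  · rw [logCount_eq_zero hp, zero_add]
    exact logCount_monotone ha (Nat.le_add_left q p)
  obtain hq | hq := le_or_gt (aboveCount a q) 1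
  · rw [logCount_eq_zero hq, add_zero]
    exact logCount_monotone ha (Nat.le_add_right p q)
  exact logCount_add_le (two_le_of_one_lt_aboveCount hp) (two_le_of_one_lt_aboveCount hq)
    (by linarith) (one_pos.trans hp) (one_pos.trans hq)

open Filter Topology

/-- The exponential growth rate of the number of rooted trees in which more than a proportion `a`
of the vertices are leaves, meaningful for `a < 1`; the function `C` of the theorem is its
exponential. -/
noncomputable def logGrowth (a : ℝ) : ℝ := limUnder atTop fun n : ℕ => logCount a n / n

theorem tendsto_logCount_div {a : ℝ} (ha : a < 1) :
    Tendsto (fun n : ℕ => logCount a n / n) atTop (𝓝 (logGrowth a)) := by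
  have hbdd : BddBelow (Set.range fun n : ℕ => -logCount a n / n) := by
    refine ⟨-Real.log 4, ?_⟩
    rintro _ ⟨n, rfl⟩
    change -Real.log 4 ≤ -logCount a n / n
    rw [neg_div, neg_le_neg_iff]
    exact div_le_of_le_mul₀ (Nat.cast_nonneg n) (by positivity)
      ((logCount_le a n).trans_eq (mul_comm _ _))
  refine tendsto_nhds_limUnder ⟨_, ((subadditive_neg_logCount ha.le).tendsto_lim hbdd).neg.congr
    fun n => ?_⟩
  rw [neg_div, neg_neg]

theorem tendsto_aboveCount_rpow {a : ℝ} (ha : a < 1) :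
    Tendsto (fun n : ℕ => (aboveCount a n : ℝ) ^ (1 / (n : ℝ))) atTop
      (𝓝 (Real.exp (logGrowth a))) := by
  refine ((Real.continuous_exp.tendsto _).comp (tendsto_logCount_div ha)).congr' ?_
  filter_upwards [eventually_aboveCount_pos ha] with n hn
  rw [Real.rpow_def_of_pos (mod_cast hn), Function.comp_apply, logCount, mul_one_div]

theorem tendsto_atTop_of_tendsto_div {f : ℕ → ℕ} {x : ℝ} (hx : 0 < x)
    (hf : Tendsto (fun n : ℕ => (f n : ℝ) / n) atTop (𝓝 x)) : Tendsto f atTop atTop := by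
  refine (tendsto_natCast_atTop_iff (R := ℝ)).1
    ((hf.pos_mul_atTop hx tendsto_natCast_atTop_atTop).congr' ?_)
  filter_upwards [eventually_ne_atTop 0] with n hn
  exact div_mul_cancel₀ _ (mod_cast hn)

theorem tendsto_logCount_comp_div {a : ℝ} (ha : a < 1) {f : ℕ → ℕ} {x : ℝ} (hx : 0 < x)
    (hf : Tendsto (fun n : ℕ => (f n : ℝ) / n) atTop (𝓝 x)) :
    Tendsto (fun n : ℕ => logCount a (f n) / n) atTop (𝓝 (x * logGrowth a)) := by
  have htop := tendsto_atTop_of_tendsto_div hx hf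
  refine (hf.mul ((tendsto_logCount_div ha).comp htop)).congr' ?_
  filter_upwards [htop.eventually_ne_atTop 0] with n hn
  have : (f n : ℝ) ≠ 0 := mod_cast hn
  rw [Function.comp_apply]
  field_simp

-- Gluing a tree with about `s * n` vertices to one with about `t * n` vertices.
theorem concaveOn_logGrowth : ConcaveOn ℝ (Set.Iio 1) logGrowth := by
  refine LinearOrder.concaveOn_of_lt (convex_Iio 1) fun x hx y hy hxy s t hs ht hst => ?_
  have ht' : t ≤ 1 := by linarith
  set q : ℕ → ℕ := fun n => ⌈t * n⌉₊
  set p : ℕ → ℕ := fun n => n - q n with hp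
  have hqn (n : ℕ) : q n ≤ n := Nat.ceil_le.2 (mul_le_of_le_one_left (Nat.cast_nonneg n) ht')
  have hpq (n : ℕ) : p n + q n = n := Nat.sub_add_cancel (hqn n)
  have hqlim : Tendsto (fun n : ℕ => (q n : ℝ) / n) atTop (𝓝 t) :=
    (tendsto_nat_ceil_mul_div_atTop ht.le).comp tendsto_natCast_atTop_atTop
  have hplim : Tendsto (fun n : ℕ => (p n : ℝ) / n) atTop (𝓝 s) := by
    rw [eq_sub_of_add_eq hst]
    refine (hqlim.const_sub 1).congr' ?_
    filter_upwards [eventually_ne_atTop 0] with n hn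
    rw [hp, Nat.cast_sub (hqn n), sub_div, div_self (mod_cast hn)]
  have hptop := tendsto_atTop_of_tendsto_div hs hplim
  have hqtop := tendsto_atTop_of_tendsto_div ht hqlim
  refine le_of_tendsto_of_tendsto ((tendsto_logCount_comp_div hx hs hplim).add
    (tendsto_logCount_comp_div hy ht hqlim))
    (tendsto_logCount_div (convex_Iio 1 hx hy hs.le ht.le hst)) ?_
  filter_upwards [hptop.eventually_ge_atTop 2, hqtop.eventually_ge_atTop 2,
    hptop.eventually (eventually_aboveCount_pos hx),
    hqtop.eventually (eventually_aboveCount_pos hy)] with n hp₂ hq₂ hp₀ hq₀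
  rw [← add_div]
  refine div_le_div_of_nonneg_right ?_ (Nat.cast_nonneg n)
  have hmean : (s * x + t * y) * (p n + q n) ≤ x * p n + y * q n := by
    have hpq' : (p n : ℝ) + q n = n := mod_cast hpq n
    have hceil : t * n ≤ q n := Nat.le_ceil _
    rw [hpq', eq_sub_of_add_eq hst, eq_sub_of_add_eq hpq']
    nlinarith
  exact (logCount_add_le hp₂ hq₂ hmean hp₀ hq₀).trans_eq (by rw [hpq]; rfl)

theorem logGrowth_lt_logGrowth_zero {a : ℝ} (ha : 1 / 2 < a) (ha' : a < 1) :
    logGrowth a < logGrowth 0 := by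
  obtain ⟨θ, hθ, hθa⟩ := exists_between ha
  obtain ⟨v, hv, hdev⟩ := UTree.exists_leafDeviation_nonpos hθ (hθa.trans ha').le
  have hgap : 0 < (a - θ) * Real.log v := mul_pos (sub_pos.2 hθa) (Real.log_pos hv)
  suffices logGrowth a + (a - θ) * Real.log v ≤ logGrowth 0 by linarith
  refine le_of_tendsto_of_tendsto ((tendsto_logCount_div ha').add_const _)
    (tendsto_logCount_div one_pos) ?_
  filter_upwards [eventually_aboveCount_pos ha', eventually_ge_atTop 2] with n hpos hn
  have hn₀ : (0 : ℝ) < n := by positivity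
  have hpos' : (0 : ℝ) < aboveCount a n := mod_cast hpos
  have hlog := Real.log_le_log (by positivity)
    (aboveCount_mul_rpow_le hv.le (hdev n hn) a)
  rw [Real.log_mul hpos'.ne' (by positivity), Real.log_rpow (by positivity),
    ← aboveCount_zero_left] at hlog
  rw [le_div_iff₀ hn₀, add_mul, div_mul_cancel₀ _ hn₀.ne', logCount, logCount]
  linarith

theorem logGrowth_strictAntiOn : StrictAntiOn logGrowth (Set.Ico (1 / 2) 1) := by
  intro x hx y hy hxy
  by_contra! hle
  have hx₀ : 0 < x := one_half_pos.trans_le hx.1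
  have hmem : x ∈ openSegment ℝ 0 y := by
    rw [openSegment_eq_Ioo (hx₀.trans hxy)]
    exact ⟨hx₀, hxy⟩
  have hzero := concaveOn_logGrowth.left_le_of_le_right (Set.mem_Iio.2 one_pos) hy.2 hmem hle
  exact (logGrowth_lt_logGrowth_zero (hx.1.trans_lt hxy) hy.2).not_ge (hzero.trans hle)

theorem theorem7_general :
    ∃ C : ℝ → ℝ, ContinuousOn C (Set.Iio 1) ∧ (∀ lam < 1, 0 < C lam) ∧
      (∀ lam < 1, Tendsto (fun n : ℕ => (aboveCount lam n : ℝ) ^ (1 / (n : ℝ))) atTop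
        (𝓝 (C lam))) ∧
      StrictAntiOn C (Set.Ico (1 / 2) 1) := by
  have hcont : ContinuousOn logGrowth (Set.Iio 1) := concaveOn_logGrowth.continuousOn isOpen_Iio
  exact ⟨fun a => Real.exp (logGrowth a), Real.continuous_exp.comp_continuousOn hcont,
    fun _ _ => Real.exp_pos _, fun _ => tendsto_aboveCount_rpow,
    Real.exp_strictMono.comp_strictAntiOn logGrowth_strictAntiOn⟩

/-- Theorem 7: there is a continuous function `C(λ)` with
`(Σ_{k>λn} a_{n,k})^{1/n} → C(λ)`, `C(1/2) = C₁`, and `C(λ) < C(1/2)` for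
`λ > 1/2`. -/
theorem theorem7 (C1 : ℝ)
    (hC1 : Filter.Tendsto (fun n : ℕ => (aPlusN n : ℝ) ^ (1 / (n : ℝ)))
      Filter.atTop (nhds C1)) :
    ∃ C : ℝ → ℝ, ContinuousOn C (Set.Ico 0 1) ∧
      (∀ lam ∈ Set.Ico (0 : ℝ) 1, 0 < C lam) ∧
      (∀ lam ∈ Set.Ico (0 : ℝ) 1,
        Filter.Tendsto (fun n : ℕ => (aboveCount lam n : ℝ) ^ (1 / (n : ℝ)))
          Filter.atTop (nhds (C lam))) ∧
      C (1 / 2) = C1 ∧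
      (∀ lam ∈ Set.Ioo (1 / 2 : ℝ) 1, C lam < C (1 / 2)) := by
  obtain ⟨C, hcont, hpos, hlim, hanti⟩ := theorem7_general
  simp only [aPlusN_eq_aboveCount] at hC1
  exact ⟨C, hcont.mono Set.Ico_subset_Iio_self, fun a ha => hpos a ha.2, fun a ha => hlim a ha.2,
    tendsto_nhds_unique (hlim _ one_half_lt_one) hC1,
    fun a ha => hanti ⟨le_rfl, one_half_lt_one⟩ ⟨ha.1.le, ha.2⟩ ha.1⟩
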